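/- Let Γ ⊂ (0,∞) be a uniformly discrete set with Σ_{γ∈Γ} 1/√γ < ∞. Then there exists a function g ∈ C¹(ℝ) such that g(t) = 0 for all t ≥ 0, both g and g′ belong to L¹(ℝ), g is not identically zero, and the Cauchy transform of g vanishes on Γ: ∫_{−∞}^{0} g(u)/(u−γ) du = 0 for every γ ∈ Γ. -/

import Mathlib

open MeasureTheory

noncomputable section

/-- A set `S ⊆ ℝ` is uniformly discrete. -/
def UniformlyDiscrete (S : Set ℝ) : Prop :=
  ∃ δ > (0:ℝ), ∀ x ∈ S, ∀ y ∈ S, x ≠ y → δ ≤ |x - y|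

/-!
Let `B` be the Blaschke product of the right half-plane with zeros at the points `√γ` and a triple
zero at `1`. The rational function `w ^ 3 / ((1 - w ^ 2) ^ 3 * (γ - w ^ 2))` has its poles in the
half-plane at zeros of `B`, so its product with `B` is holomorphic there and decays at infinity, and
the integral of this product over the imaginary axis vanishes. On the axis
`B (y * I) = exp (-φ y * I)` with `φ y = 6 * arctan y + ∑ 2 * arctan (y / √γ)`, so the integral of
`y ^ 3 / ((1 + y ^ 2) ^ 3 * (γ + y ^ 2)) * sin (φ y)` is zero. The substitution `u = -y ^ 2` turns
it into the Cauchy transform at `γ` of the function `g` with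
`g (-y ^ 2) = y ^ 2 / (1 + y ^ 2) ^ 3 * sin (φ y)` for `y ≥ 0`. Since `∑ 1 / √γ < ∞`, the phase `φ`
is `C¹` with bounded derivative, which gives the regularity of `g`, and `g ≠ 0` because
`φ 0 = 0 < φ' 0`.
-/

open Filter Topology
open Complex (I)

section HalfPlane

variable {E : Type*} [NormedAddCommGroup E] [NormedSpace ℂ E] {f : ℂ → E} {C : ℝ}

lemma norm_intervalIntegral_imaginaryAxis_le (hf : DiffContOnCl ℂ f {z | 0 < z.re})
    (hbound : ∀ z : ℂ, 0 ≤ z.re → ‖f z‖ ≤ C / (1 + ‖z‖ ^ 2)) {R : ℝ} (hR : 0 < R) :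
    ‖∫ y in (-R)..R, f (y * I)‖ ≤ 4 * C / R := by
  have hcont : ContinuousOn f {z | 0 ≤ z.re} :=
    Complex.closure_setOfPred_lt_re 0 ▸ hf.continuousOn
  have hC : 0 ≤ C := by simpa using (norm_nonneg _).trans (hbound 0 le_rfl)
  have hfar (z : ℂ) (hz : 0 ≤ z.re) (hRz : R ≤ ‖z‖) : ‖f z‖ ≤ C / R ^ 2 :=
    (hbound z hz).trans (by gcongr; nlinarith)
  have horizontal (v : ℝ) (hv : |v| = R) :
      ‖∫ x in (0 : ℝ)..R, f (x + v * I)‖ ≤ C / R ^ 2 * |R - 0| := by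
    refine intervalIntegral.norm_integral_le_of_norm_le_const fun x hx ↦ hfar _ ?_ ?_
    · rw [Set.uIoc_of_le hR.le] at hx
      simpa using hx.1.le
    · simpa [hv] using Complex.abs_im_le_norm (x + v * I)
  have vertical : ‖∫ y in (-R)..R, f (R + y * I)‖ ≤ C / R ^ 2 * |R - -R| := by
    refine intervalIntegral.norm_integral_le_of_norm_le_const fun y _ ↦ hfar _ ?_ ?_
    · simpa using hR.le
    · simpa [abs_of_pos hR] using Complex.abs_re_le_norm (R + y * I)
  have hrect := Complex.integral_boundary_rect_eq_zero_of_continuousOn_of_differentiableOn f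
    ⟨0, -R⟩ ⟨R, R⟩
    (hcont.mono fun z hz ↦ by simpa [hR.le] using (Set.uIcc_of_le hR.le ▸ hz.1).1)
    (hf.differentiableOn.mono fun z hz ↦ by simpa [hR.le] using hz.1.1)
  simp only [Complex.ofReal_zero, zero_add, sub_eq_zero] at hrect
  calc ‖∫ y in (-R)..R, f (y * I)‖ = ‖I • ∫ y in (-R)..R, f (y * I)‖ := by simp [norm_smul]
    _ ≤ C / R ^ 2 * |R - 0| + C / R ^ 2 * |R - 0| + C / R ^ 2 * |R - -R| := by
      rw [← hrect]
      refine (norm_add_le _ _).trans (add_le_add ((norm_sub_le _ _).trans ?_) ?_)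
      · exact add_le_add (horizontal _ (by simp [hR.le])) (horizontal _ (abs_of_pos hR))
      · simpa [norm_smul] using vertical
    _ = 4 * C / R := by
      rw [sub_zero, sub_neg_eq_add, abs_of_pos hR, abs_of_pos (by positivity)]
      field_simp
      ring

theorem integral_imaginaryAxis_eq_zero (hf : DiffContOnCl ℂ f {z | 0 < z.re})
    (hbound : ∀ z : ℂ, 0 ≤ z.re → ‖f z‖ ≤ C / (1 + ‖z‖ ^ 2)) :
    ∫ y : ℝ, f (y * I) = 0 := by
  have hcont : Continuous fun y : ℝ ↦ f (y * I) := by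
    refine hf.continuousOn.comp_continuous (by fun_prop) fun y ↦ ?_
    rw [Complex.closure_setOfPred_lt_re]
    simp
  have hint : Integrable fun y : ℝ ↦ f (y * I) := by
    refine (integrable_inv_one_add_sq.const_mul C).mono' hcont.aestronglyMeasurable (.of_forall ?_)
    exact fun y ↦ by simpa [div_eq_mul_inv] using hbound (y * I) (by simp)
  have hlim : Tendsto (fun R : ℝ ↦ 4 * C / R) atTop (𝓝 0) := tendsto_id.const_div_atTop _
  refine tendsto_nhds_unique
    (intervalIntegral_tendsto_integral hint tendsto_neg_atTop_atBot tendsto_id)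
    (squeeze_zero_norm' ?_ hlim)
  filter_upwards [eventually_gt_atTop 0] with R hR
  exact norm_intervalIntegral_imaginaryAxis_le hf hbound hR

end HalfPlane

section Blaschke

/-- The Blaschke factor of the right half-plane with zero at the real point `b`. -/
def blaschkeFactor (b : ℝ) (w : ℂ) : ℂ := (b - w) / (b + w)

lemma sq_add_norm_sq_le_norm_ofReal_add_sq {b : ℝ} (hb : 0 ≤ b) {w : ℂ} (hw : 0 ≤ w.re) :
    b ^ 2 + ‖w‖ ^ 2 ≤ ‖b + w‖ ^ 2 := by
  have := mul_nonneg hb hw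
  simp only [Complex.sq_norm, Complex.normSq_apply, Complex.add_re, Complex.add_im,
    Complex.ofReal_re, Complex.ofReal_im]
  linarith

lemma ofReal_add_ne_zero {b : ℝ} (hb : 0 < b) {w : ℂ} (hw : 0 ≤ w.re) : (b : ℂ) + w ≠ 0 :=
  fun h ↦ (add_pos_of_pos_of_nonneg hb hw).ne' (by simpa using congrArg Complex.re h)

lemma differentiableOn_blaschkeFactor {b : ℝ} (hb : 0 < b) :
    DifferentiableOn ℂ (blaschkeFactor b) {w | 0 ≤ w.re} :=
  DifferentiableOn.div (by fun_prop) (by fun_prop) fun _ hw ↦ ofReal_add_ne_zero hb hw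

lemma norm_blaschkeFactor_le_one {b : ℝ} (hb : 0 ≤ b) {w : ℂ} (hw : 0 ≤ w.re) :
    ‖blaschkeFactor b w‖ ≤ 1 := by
  rw [blaschkeFactor, norm_div]
  refine div_le_one_of_le₀ ((sq_le_sq₀ (norm_nonneg _) (norm_nonneg _)).mp ?_) (norm_nonneg _)
  have := mul_nonneg hb hw
  simp only [Complex.sq_norm, Complex.normSq_apply, Complex.add_re, Complex.add_im, Complex.sub_re,
    Complex.sub_im, Complex.ofReal_re, Complex.ofReal_im]
  linarith

lemma blaschkeFactor_mul_I {b : ℝ} (hb : b ≠ 0) (y : ℝ) :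
    blaschkeFactor b (y * I) = Complex.exp (-((2 * Real.arctan (y / b) : ℝ) : ℂ) * I) := by
  set t : ℝ := y / b with ht
  have hy : y = b * t := by rw [ht]; field_simp
  have hadd : 1 + t * I ≠ 0 := fun h ↦ by simpa using congrArg Complex.re h
  have hsub : 1 - t * I ≠ 0 := fun h ↦ by simpa using congrArg Complex.re h
  have hlog : -((2 * Real.arctan t : ℝ) : ℂ) * I = -Complex.log ((1 + t * I) / (1 - t * I)) := by
    rw [Complex.ofReal_mul, Complex.ofReal_arctan, Complex.arctan]
    push_cast
    linear_combination Complex.log ((1 + t * I) / (1 - t * I)) * Complex.I_sq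
  have hb' : (b : ℂ) ≠ 0 := mod_cast hb
  rw [hlog, Complex.exp_neg, Complex.exp_log (div_ne_zero hadd hsub), inv_div,
    ← mul_div_mul_left _ _ hb', blaschkeFactor, hy]
  push_cast
  ring_nf

/-- The modulus, up to sign, of the kernel `w ^ 3 / ((1 + w) ^ 6 * (b + w) ^ 2)` at `w = y * I`. -/
def axisWeight (b y : ℝ) : ℝ := y ^ 3 / ((1 + y ^ 2) ^ 3 * (b ^ 2 + y ^ 2))

-- Multiplying by conjugates, `1 / (b + w) ^ 2 = blaschkeFactor b w / (b ^ 2 - w ^ 2)`.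
lemma axis_kernel_eq {b : ℝ} (hb : 0 < b) (y : ℝ) :
    (y * I) ^ 3 / ((1 + y * I) ^ 6 * (b + y * I) ^ 2) =
      -I * (axisWeight b y * (blaschkeFactor 1 (y * I) ^ 3 * blaschkeFactor b (y * I))) := by
  have hadd (c : ℝ) (hc : 0 < c) : (c : ℂ) + y * I ≠ 0 := ofReal_add_ne_zero hc (by simp)
  have hsub (c : ℝ) (hc : 0 < c) : (c : ℂ) - y * I ≠ 0 := by
    simpa [sub_eq_add_neg] using ofReal_add_ne_zero hc (w := -(y * I)) (by simp)
  have hfactor (c : ℝ) : (c : ℂ) ^ 2 + (y : ℂ) ^ 2 = (c + y * I) * (c - y * I) := by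
    linear_combination (y : ℂ) ^ 2 * Complex.I_sq
  have hadd_one := hadd 1 one_pos
  have hsub_one := hsub 1 one_pos
  have hfactor_one := hfactor 1
  simp only [Complex.ofReal_one, one_pow] at hadd_one hsub_one hfactor_one
  simp only [axisWeight, blaschkeFactor, mul_pow, Complex.I_pow_three]
  push_cast
  rw [hfactor_one, hfactor b]
  have := hadd b hb
  have := hsub b hb
  field_simp

lemma norm_kernel_le {b : ℝ} (hb : 0 < b) {w : ℂ} (hw : 0 ≤ w.re) :
    ‖w ^ 3 / ((1 + w) ^ 6 * (b + w) ^ 2)‖ ≤ (b ^ 2)⁻¹ / (1 + ‖w‖ ^ 2) := by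
  have hone : 1 + ‖w‖ ^ 2 ≤ ‖1 + w‖ ^ 2 := by
    simpa using sq_add_norm_sq_le_norm_ofReal_add_sq zero_le_one hw
  have hadd : b ^ 2 ≤ ‖b + w‖ ^ 2 :=
    (le_add_of_nonneg_right (by positivity)).trans (sq_add_norm_sq_le_norm_ofReal_add_sq hb.le hw)
  have hcube : ‖w‖ ^ 3 ≤ (1 + ‖w‖ ^ 2) ^ 2 := by
    nlinarith [sq_nonneg (‖w‖ ^ 2 - ‖w‖), sq_nonneg ‖w‖, pow_nonneg (norm_nonneg w) 3]
  calc ‖w ^ 3 / ((1 + w) ^ 6 * (b + w) ^ 2)‖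
      = ‖w‖ ^ 3 / ((‖1 + w‖ ^ 2) ^ 3 * ‖b + w‖ ^ 2) := by
        rw [norm_div, norm_mul, norm_pow, norm_pow, norm_pow]; ring
    _ ≤ (1 + ‖w‖ ^ 2) ^ 2 / ((1 + ‖w‖ ^ 2) ^ 3 * b ^ 2) := by gcongr
    _ = (b ^ 2)⁻¹ / (1 + ‖w‖ ^ 2) := by field_simp

lemma integral_axisWeight_mul_eq_zero {b : ℝ} (hb : 0 < b) {h : ℂ → ℂ} {C : ℝ}
    (hd : DifferentiableOn ℂ h {w | 0 ≤ w.re}) (hC : ∀ w : ℂ, 0 ≤ w.re → ‖h w‖ ≤ C) :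
    ∫ y : ℝ, (axisWeight b y : ℂ) *
      (blaschkeFactor 1 (y * I) ^ 3 * (blaschkeFactor b (y * I) * h (y * I))) = 0 := by
  have hdiff : DifferentiableOn ℂ (fun w ↦ w ^ 3 / ((1 + w) ^ 6 * (b + w) ^ 2) * h w)
      {w | 0 ≤ w.re} := by
    refine DifferentiableOn.mul (DifferentiableOn.div (by fun_prop) (by fun_prop) fun w hw ↦ ?_) hd
    have := ofReal_add_ne_zero one_pos hw
    exact mul_ne_zero (pow_ne_zero _ (mod_cast this)) (pow_ne_zero _ (ofReal_add_ne_zero hb hw))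
  have hzero := integral_imaginaryAxis_eq_zero (C := (b ^ 2)⁻¹ * C)
    (Complex.closure_setOfPred_lt_re 0 ▸ hdiff).diffContOnCl fun w hw ↦ by
      rw [norm_mul, mul_div_right_comm]
      gcongr
      exacts [norm_kernel_le hb hw, hC w hw]
  simp only [axis_kernel_eq hb, mul_assoc, integral_const_mul] at hzero
  simpa using hzero

variable {ι : Type*} {a : ι → ℝ}

lemma integral_axisWeight_mul_prod_blaschkeFactor_eq_zero (ha : ∀ i, 0 < a i) {s : Finset ι} {i : ι}
    (hi : i ∈ s) :
    ∫ y : ℝ, (axisWeight (a i) y : ℂ) *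
      (blaschkeFactor 1 (y * I) ^ 3 * ∏ k ∈ s, blaschkeFactor (a k) (y * I)) = 0 := by
  classical
  simp only [← Finset.mul_prod_erase s _ hi]
  refine integral_axisWeight_mul_eq_zero (ha i) (C := 1)
    (h := fun w ↦ ∏ k ∈ s.erase i, blaschkeFactor (a k) w)
    (DifferentiableOn.fun_finsetProd fun k _ ↦ differentiableOn_blaschkeFactor (ha k)) ?_
  intro w hw
  rw [norm_prod]
  exact Finset.prod_le_one (fun _ _ ↦ norm_nonneg _)
    fun k _ ↦ norm_blaschkeFactor_le_one (ha k).le hw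

end Blaschke

section Phase

variable {ι : Type*} {a : ι → ℝ}

/-- The phase of the Blaschke product with zeros `a` and a triple zero at `1`: on the imaginary axis
that product equals `exp (-blaschkePhase a y * I)`. -/
def blaschkePhase (a : ι → ℝ) (y : ℝ) : ℝ :=
  6 * Real.arctan y + ∑' i, 2 * Real.arctan (y / a i)

/-- The derivative of `blaschkePhase a`, obtained termwise. -/
def blaschkePhaseDeriv (a : ι → ℝ) (y : ℝ) : ℝ :=
  6 / (1 + y ^ 2) + ∑' i, 2 * a i / (a i ^ 2 + y ^ 2)

lemma blaschkePhase_zero (a : ι → ℝ) : blaschkePhase a 0 = 0 := by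
  simp [blaschkePhase]

lemma blaschkePhase_neg (a : ι → ℝ) (y : ℝ) : blaschkePhase a (-y) = -blaschkePhase a y := by
  simp only [blaschkePhase, neg_div, Real.arctan_neg, mul_neg, tsum_neg]
  ring

lemma hasDerivAt_two_mul_arctan_div {b : ℝ} (hb : b ≠ 0) (y : ℝ) :
    HasDerivAt (fun y ↦ 2 * Real.arctan (y / b)) (2 * b / (b ^ 2 + y ^ 2)) y := by
  refine (((hasDerivAt_id y).div_const b).arctan.const_mul 2).congr_deriv ?_
  simp only [id]
  field_simp

lemma norm_two_mul_div_sq_add_sq_le {b : ℝ} (hb : 0 < b) (y : ℝ) :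
    ‖2 * b / (b ^ 2 + y ^ 2)‖ ≤ 2 * b⁻¹ := by
  rw [Real.norm_of_nonneg (by positivity)]
  calc 2 * b / (b ^ 2 + y ^ 2) ≤ 2 * b / b ^ 2 := by
        gcongr
        exact le_add_of_nonneg_right (sq_nonneg y)
    _ = 2 * b⁻¹ := by field_simp

lemma blaschkePhaseDeriv_pos (ha : ∀ i, 0 < a i) (y : ℝ) : 0 < blaschkePhaseDeriv a y :=
  add_pos_of_pos_of_nonneg (by positivity) (tsum_nonneg fun i ↦ by have := ha i; positivity)

lemma summable_two_mul_arctan_div (ha : ∀ i, 0 < a i) (hsum : Summable fun i ↦ (a i)⁻¹) (y : ℝ) :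
    Summable fun i ↦ 2 * Real.arctan (y / a i) :=
  summable_of_summable_hasDerivAt (hsum.mul_left 2)
    (fun i y ↦ hasDerivAt_two_mul_arctan_div (ha i).ne' y)
    (fun i ↦ norm_two_mul_div_sq_add_sq_le (ha i)) (y₀ := 0) (by simp [summable_zero]) y

lemma hasDerivAt_blaschkePhase (ha : ∀ i, 0 < a i) (hsum : Summable fun i ↦ (a i)⁻¹) (y : ℝ) :
    HasDerivAt (blaschkePhase a) (blaschkePhaseDeriv a y) y := by
  have harctan : HasDerivAt (fun y ↦ 6 * Real.arctan y) (6 / (1 + y ^ 2)) y :=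
    ((Real.hasDerivAt_arctan y).const_mul 6).congr_deriv (by ring)
  exact harctan.add <| hasDerivAt_tsum (hsum.mul_left 2)
    (fun i y ↦ hasDerivAt_two_mul_arctan_div (ha i).ne' y)
    (fun i ↦ norm_two_mul_div_sq_add_sq_le (ha i))
    (summable_two_mul_arctan_div ha hsum 0) y

lemma continuous_blaschkePhase (ha : ∀ i, 0 < a i) (hsum : Summable fun i ↦ (a i)⁻¹) :
    Continuous (blaschkePhase a) :=
  continuous_iff_continuousAt.mpr fun y ↦ (hasDerivAt_blaschkePhase ha hsum y).continuousAt

lemma continuous_blaschkePhaseDeriv (ha : ∀ i, 0 < a i) (hsum : Summable fun i ↦ (a i)⁻¹) :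
    Continuous (blaschkePhaseDeriv a) := by
  refine .add (.div (by fun_prop) (by fun_prop) fun y ↦ by positivity) <|
    continuous_tsum (fun i ↦ .div (by fun_prop) (by fun_prop) fun y ↦ ?_) (hsum.mul_left 2)
      fun i ↦ norm_two_mul_div_sq_add_sq_le (ha i)
  have := ha i
  positivity

lemma abs_blaschkePhaseDeriv_le (ha : ∀ i, 0 < a i) (hsum : Summable fun i ↦ (a i)⁻¹) (y : ℝ) :
    |blaschkePhaseDeriv a y| ≤ 6 + ∑' i, 2 * (a i)⁻¹ := by
  refine (abs_add_le _ _).trans (add_le_add ?_ ?_)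
  · rw [abs_of_nonneg (by positivity)]
    exact div_le_self (by norm_num) (le_add_of_nonneg_right (sq_nonneg y))
  · exact tsum_of_norm_bounded (hsum.mul_left 2).hasSum
      fun i ↦ norm_two_mul_div_sq_add_sq_le (ha i) y

lemma tendsto_prod_blaschkeFactor (ha : ∀ i, 0 < a i) (hsum : Summable fun i ↦ (a i)⁻¹) (y : ℝ) :
    Tendsto (fun s : Finset ι ↦
        blaschkeFactor 1 (y * I) ^ 3 * ∏ k ∈ s, blaschkeFactor (a k) (y * I))
      atTop (𝓝 (Complex.exp (-(blaschkePhase a y : ℂ) * I))) := by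
  have hprod : HasProd (fun k ↦ blaschkeFactor (a k) (y * I))
      (Complex.exp (-((∑' k, 2 * Real.arctan (y / a k) : ℝ) : ℂ) * I)) := by
    convert! ((Complex.hasSum_ofReal.mpr
      (summable_two_mul_arctan_div ha hsum y).hasSum).neg.mul_right I).cexp using 2 with k
    exact blaschkeFactor_mul_I (ha k).ne' y
  convert! hprod.const_mul (blaschkeFactor 1 (y * I) ^ 3) using 2
  rw [blaschkeFactor_mul_I one_ne_zero, ← Complex.exp_nat_mul, ← Complex.exp_add, blaschkePhase]
  congr 1
  push_cast
  ring_nf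

lemma continuous_axisWeight {b : ℝ} (hb : b ≠ 0) : Continuous (axisWeight b) :=
  .div (by fun_prop) (by fun_prop) fun y ↦ by positivity

lemma integrable_axisWeight {b : ℝ} (hb : 0 < b) : Integrable (axisWeight b) := by
  refine (integrable_inv_one_add_sq.const_mul (b ^ 2)⁻¹).mono'
    (continuous_axisWeight hb.ne').aestronglyMeasurable (.of_forall fun y ↦ ?_)
  have hcube : |y| ^ 3 ≤ (1 + y ^ 2) ^ 2 := by
    nlinarith [sq_nonneg (|y| ^ 2 - |y|), sq_abs y, pow_nonneg (abs_nonneg y) 3]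
  calc ‖axisWeight b y‖ = |y| ^ 3 / ((1 + y ^ 2) ^ 3 * (b ^ 2 + y ^ 2)) := by
        rw [axisWeight, Real.norm_eq_abs, abs_div, abs_pow,
          abs_of_pos (a := _ * _) (by positivity)]
    _ ≤ (1 + y ^ 2) ^ 2 / ((1 + y ^ 2) ^ 3 * b ^ 2) := by
        gcongr
        exact le_add_of_nonneg_right (sq_nonneg y)
    _ = (b ^ 2)⁻¹ * (1 + y ^ 2)⁻¹ := by field_simp

lemma countable_of_summable_inv (ha : ∀ i, 0 < a i) (hsum : Summable fun i ↦ (a i)⁻¹) :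
    Countable ι := by
  have hsupport : Function.support (fun i ↦ (a i)⁻¹) = Set.univ :=
    Set.eq_univ_of_forall fun i ↦ (inv_pos.mpr (ha i)).ne'
  exact Set.countable_univ_iff.mp (hsupport ▸ hsum.countable_support)

lemma integral_axisWeight_mul_exp_blaschkePhase_eq_zero (ha : ∀ i, 0 < a i)
    (hsum : Summable fun i ↦ (a i)⁻¹) (i : ι) :
    ∫ y : ℝ, (axisWeight (a i) y : ℂ) * Complex.exp (-(blaschkePhase a y : ℂ) * I) = 0 := by
  have := countable_of_summable_inv ha hsum
  have hlim := tendsto_integral_filter_of_dominated_convergence (l := atTop)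
    (F := fun (s : Finset ι) (y : ℝ) ↦ (axisWeight (a i) y : ℂ) *
      (blaschkeFactor 1 (y * I) ^ 3 * ∏ k ∈ s, blaschkeFactor (a k) (y * I)))
    (fun y ↦ ‖axisWeight (a i) y‖) (.of_forall fun s ↦ ?_)
    (.of_forall fun s ↦ .of_forall fun y ↦ ?_) (integrable_axisWeight (ha i)).norm
    (.of_forall fun y ↦ (tendsto_prod_blaschkeFactor ha hsum y).const_mul _)
  · refine tendsto_nhds_unique hlim (tendsto_const_nhds.congr' ?_)
    filter_upwards [eventually_ge_atTop {i}] with s hs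
    exact (integral_axisWeight_mul_prod_blaschkeFactor_eq_zero ha
      (Finset.singleton_subset_iff.mp hs)).symm
  · have := continuous_axisWeight (ha i).ne'
    unfold blaschkeFactor
    exact Measurable.aestronglyMeasurable (by fun_prop)
  · rw [norm_mul, Complex.norm_real]
    refine mul_le_of_le_one_right (norm_nonneg _) ?_
    rw [norm_mul, norm_pow, norm_prod]
    have hle (b : ℝ) (hb : 0 < b) : ‖blaschkeFactor b (y * I)‖ ≤ 1 :=
      norm_blaschkeFactor_le_one hb.le (by simp)
    exact mul_le_one₀ (pow_le_one₀ (norm_nonneg _) (hle 1 one_pos))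
      (Finset.prod_nonneg fun _ _ ↦ norm_nonneg _)
      (Finset.prod_le_one (fun _ _ ↦ norm_nonneg _) fun k _ ↦ hle _ (ha k))

lemma integral_axisWeight_mul_sin_blaschkePhase_eq_zero (ha : ∀ i, 0 < a i)
    (hsum : Summable fun i ↦ (a i)⁻¹) (i : ι) :
    ∫ y : ℝ, axisWeight (a i) y * Real.sin (blaschkePhase a y) = 0 := by
  have hcont := continuous_blaschkePhase ha hsum
  have hint : Integrable fun y : ℝ ↦
      (axisWeight (a i) y : ℂ) * Complex.exp (-(blaschkePhase a y : ℂ) * I) := by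
    refine (integrable_axisWeight (ha i)).ofReal.mul_bdd (c := 1)
      (Continuous.aestronglyMeasurable (by fun_prop)) (.of_forall fun y ↦ ?_)
    rw [← Complex.ofReal_neg, Complex.norm_exp_ofReal_mul_I]
  have him := integral_im hint
  rw [integral_axisWeight_mul_exp_blaschkePhase_eq_zero ha hsum i] at him
  simpa [← Complex.ofReal_neg, Complex.exp_ofReal_mul_I_im, integral_neg] using him

end Phase

section SqrtNeg

variable {E : Type*} [NormedAddCommGroup E] {F k : ℝ → E}

lemma integrable_comp_sqrt_neg {C : ℝ} (hF : Continuous F) (hzero : F 0 = 0)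
    (hbound : ∀ y, ‖F y‖ ≤ C / (1 + y ^ 4)) : Integrable fun u ↦ F √(-u) := by
  have hC : 0 ≤ C := by simpa [hzero] using hbound 0
  refine (integrable_inv_one_add_sq.const_mul C).mono'
    (Continuous.aestronglyMeasurable (by fun_prop)) (.of_forall fun u ↦ ?_)
  rcases le_total u 0 with hu | hu
  · have hpow : √(-u) ^ 4 = u ^ 2 := by
      rw [show √(-u) ^ 4 = (√(-u) ^ 2) ^ 2 by ring, Real.sq_sqrt (neg_nonneg.mpr hu), neg_sq]
    simpa [hpow, div_eq_mul_inv] using hbound √(-u)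
  · rw [Real.sqrt_eq_zero_of_nonpos (neg_nonpos.mpr hu), hzero, norm_zero]
    positivity

variable [NormedSpace ℝ E]

-- The factor `y` in `F'` absorbs the singularity of the square root at the origin.
lemma hasDerivAt_comp_sqrt_neg (hF : ∀ y, HasDerivAt F (y • k y) y) (hk : Continuous k)
    (hzero : k 0 = 0) (u : ℝ) :
    HasDerivAt (fun u ↦ F √(-u)) (-(1 / 2 : ℝ) • k √(-u)) u := by
  have hcont : Continuous F := continuous_iff_continuousAt.mpr fun y ↦ (hF y).continuousAt
  refine hasDerivAt_of_hasDerivAt_of_ne' (x := 0) (g := fun u ↦ -(1 / 2 : ℝ) • k √(-u))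
    (fun v hv ↦ ?_) (by fun_prop) (by fun_prop) u
  rcases hv.lt_or_gt with hneg | hpos
  · have hsqrt : 0 < √(-v) := Real.sqrt_pos.mpr (neg_pos.mpr hneg)
    refine ((hF _).scomp v ((hasDerivAt_neg v).sqrt (neg_pos.mpr hneg).ne')).congr_deriv ?_
    rw [smul_smul]
    congr 1
    field_simp
  · have hsqrt {w : ℝ} (hw : 0 < w) : √(-w) = 0 := Real.sqrt_eq_zero_of_nonpos (by linarith)
    rw [hsqrt hpos, hzero, smul_zero]
    refine (hasDerivAt_const v (F 0)).congr_of_eventuallyEq ?_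
    filter_upwards [Ioi_mem_nhds hpos] with w hw
    rw [hsqrt hw]

lemma deriv_comp_sqrt_neg (hF : ∀ y, HasDerivAt F (y • k y) y) (hk : Continuous k)
    (hzero : k 0 = 0) : deriv (fun u ↦ F √(-u)) = fun u ↦ -(1 / 2 : ℝ) • k √(-u) :=
  funext fun u ↦ (hasDerivAt_comp_sqrt_neg hF hk hzero u).deriv

lemma contDiff_one_comp_sqrt_neg (hF : ∀ y, HasDerivAt F (y • k y) y) (hk : Continuous k)
    (hzero : k 0 = 0) : ContDiff ℝ 1 fun u ↦ F √(-u) := by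
  rw [contDiff_one_iff_deriv, deriv_comp_sqrt_neg hF hk hzero]
  exact ⟨fun u ↦ (hasDerivAt_comp_sqrt_neg hF hk hzero u).differentiableAt, by fun_prop⟩

lemma integrable_deriv_comp_sqrt_neg (hF : ∀ y, HasDerivAt F (y • k y) y) (hk : Continuous k)
    (hzero : k 0 = 0) {C : ℝ} (hbound : ∀ y, ‖k y‖ ≤ C / (1 + y ^ 4)) :
    Integrable (deriv fun u ↦ F √(-u)) := by
  rw [deriv_comp_sqrt_neg hF hk hzero]
  exact (integrable_comp_sqrt_neg hk hzero hbound).smul _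

lemma integral_Iio_zero_eq_integral_Ioi_neg_sq (G : ℝ → E) :
    ∫ u in Set.Iio 0, G u = ∫ y in Set.Ioi 0, (2 * y) • G (-y ^ 2) := by
  have hneg := integral_comp_neg_Ioi 0 G
  rw [neg_zero] at hneg
  rw [← integral_Iic_eq_integral_Iio, ← hneg,
    ← integral_comp_rpow_Ioi_of_pos two_pos]
  norm_num [Real.rpow_two]

lemma integral_comp_sqrt_neg_div_eq_of_odd {F : ℝ → ℝ} (hodd : ∀ y, F (-y) = -F y) (γ : ℝ) :
    ∫ u in Set.Iio 0, F √(-u) / (u - γ) = -∫ y, y * F y / (y ^ 2 + γ) := by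
  have heven (y : ℝ) : |y| * F |y| / (|y| ^ 2 + γ) = y * F y / (y ^ 2 + γ) := by
    rcases abs_choice y with h | h <;> simp [h, hodd]
  have hfold := integral_comp_abs (f := fun y ↦ y * F y / (y ^ 2 + γ))
  simp only [heven] at hfold
  rw [integral_Iio_zero_eq_integral_Ioi_neg_sq, hfold, ← integral_const_mul, ← integral_neg]
  refine setIntegral_congr_fun measurableSet_Ioi fun y hy ↦ ?_
  have hy : 0 ≤ y := le_of_lt hy
  simp only [smul_eq_mul, neg_neg, Real.sqrt_sq hy]
  rw [← neg_add', div_neg]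
  ring

end SqrtNeg

section DampedSine

variable {φ φ' : ℝ → ℝ}

/-- The sine of the phase `φ`, damped so that `u ↦ dampedSine φ √(-u)` is integrable and `C¹`. -/
def dampedSine (φ : ℝ → ℝ) (y : ℝ) : ℝ := y ^ 2 / (1 + y ^ 2) ^ 3 * Real.sin (φ y)

/-- The derivative of `dampedSine φ` divided by its argument, where `φ'` is the derivative of `φ`;
the quotient is written out so that it is also correct at `0`. -/
def dampedSineSlope (φ φ' : ℝ → ℝ) (y : ℝ) : ℝ :=
  2 * (1 - 2 * y ^ 2) / (1 + y ^ 2) ^ 4 * Real.sin (φ y) +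
    y / (1 + y ^ 2) ^ 3 * (Real.cos (φ y) * φ' y)

lemma dampedSine_zero (φ : ℝ → ℝ) : dampedSine φ 0 = 0 := by simp [dampedSine]

lemma dampedSine_neg (hφ : ∀ y, φ (-y) = -φ y) (y : ℝ) : dampedSine φ (-y) = -dampedSine φ y := by
  simp [dampedSine, hφ]

lemma dampedSineSlope_zero (hφ : φ 0 = 0) : dampedSineSlope φ φ' 0 = 0 := by
  simp [dampedSineSlope, hφ]

lemma hasDerivAt_dampedSine {y : ℝ} (hφ : HasDerivAt φ (φ' y) y) :
    HasDerivAt (dampedSine φ) (y * dampedSineSlope φ φ' y) y := by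
  have hnum : HasDerivAt (fun y : ℝ ↦ y ^ 2) (2 * y) y := by simpa using hasDerivAt_pow 2 y
  have hden : HasDerivAt (fun y : ℝ ↦ (1 + y ^ 2) ^ 3) (3 * (1 + y ^ 2) ^ 2 * (2 * y)) y := by
    simpa using (hnum.const_add 1).fun_pow 3
  refine ((hnum.fun_div hden (by positivity)).mul hφ.sin).congr_deriv ?_
  rw [dampedSineSlope]
  field_simp
  ring

lemma continuous_dampedSine (hφ : Continuous φ) : Continuous (dampedSine φ) :=
  .mul (.div (by fun_prop) (by fun_prop) fun y ↦ by positivity) (by fun_prop)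

lemma continuous_dampedSineSlope (hφ : Continuous φ) (hφ' : Continuous φ') :
    Continuous (dampedSineSlope φ φ') :=
  .add (.mul (.div (by fun_prop) (by fun_prop) fun y ↦ by positivity) (by fun_prop))
    (.mul (.div (by fun_prop) (by fun_prop) fun y ↦ by positivity) (by fun_prop))

lemma inv_one_add_sq_sq_le (y : ℝ) : ((1 + y ^ 2) ^ 2)⁻¹ ≤ (1 + y ^ 4)⁻¹ :=
  inv_anti₀ (by positivity) (by nlinarith [sq_nonneg y])

lemma abs_dampedSine_le (φ : ℝ → ℝ) (y : ℝ) : |dampedSine φ y| ≤ 1 / (1 + y ^ 4) := by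
  have hweight : y ^ 2 / (1 + y ^ 2) ^ 3 ≤ ((1 + y ^ 2) ^ 2)⁻¹ := by
    rw [div_le_iff₀ (by positivity)]
    field_simp
    linarith
  rw [dampedSine, abs_mul, abs_of_nonneg (by positivity), one_div]
  exact (mul_le_of_le_one_right (by positivity) (Real.abs_sin_le_one _)).trans
    (hweight.trans (inv_one_add_sq_sq_le y))

lemma abs_dampedSineSlope_le {M y : ℝ} (hφ' : |φ' y| ≤ M) :
    |dampedSineSlope φ φ' y| ≤ (4 + M) / (1 + y ^ 4) := by
  have hM : 0 ≤ M := (abs_nonneg _).trans hφ'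
  have hsin : |2 * (1 - 2 * y ^ 2) / (1 + y ^ 2) ^ 4| ≤ 4 * ((1 + y ^ 2) ^ 2)⁻¹ := by
    have hnum : |2 * (1 - 2 * y ^ 2)| ≤ 4 * (1 + y ^ 2) ^ 2 :=
      abs_le.mpr ⟨by nlinarith [sq_nonneg y], by nlinarith [sq_nonneg y]⟩
    rw [abs_div, abs_of_pos (a := (1 + y ^ 2) ^ 4) (by positivity), div_le_iff₀ (by positivity)]
    refine hnum.trans_eq ?_
    field_simp
  have hcos : |y / (1 + y ^ 2) ^ 3| ≤ ((1 + y ^ 2) ^ 2)⁻¹ := by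
    have hnum : |y| ≤ 1 + y ^ 2 := abs_le.mpr ⟨by nlinarith, by nlinarith⟩
    rw [abs_div, abs_of_pos (a := (1 + y ^ 2) ^ 3) (by positivity), div_le_iff₀ (by positivity)]
    refine hnum.trans_eq ?_
    field_simp
  calc |dampedSineSlope φ φ' y|
      ≤ 4 * ((1 + y ^ 2) ^ 2)⁻¹ * 1 + ((1 + y ^ 2) ^ 2)⁻¹ * (1 * M) := by
        refine (abs_add_le _ _).trans ?_
        simp only [abs_mul]
        gcongr
        exacts [Real.abs_sin_le_one _, Real.abs_cos_le_one _]
    _ = (4 + M) * ((1 + y ^ 2) ^ 2)⁻¹ := by ring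
    _ ≤ (4 + M) / (1 + y ^ 4) := mul_le_mul_of_nonneg_left (inv_one_add_sq_sq_le y) (by positivity)

lemma exists_dampedSine_ne_zero (hφ : HasDerivAt φ (φ' 0) 0) (hzero : φ 0 = 0) (hne : φ' 0 ≠ 0) :
    ∃ y > 0, dampedSine φ y ≠ 0 := by
  have hsin : HasDerivAt (fun y ↦ Real.sin (φ y)) (φ' 0) 0 := by simpa [hzero] using hφ.sin
  obtain ⟨y, hsin_ne, hpos : 0 < y⟩ :=
    (((hsin.eventually_ne hne).filter_mono (nhdsGT_le_nhdsNE 0)).and self_mem_nhdsWithin).exists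
  exact ⟨y, hpos, mul_ne_zero (by positivity) hsin_ne⟩

end DampedSine

section FoldedSine

variable {φ φ' : ℝ → ℝ}

/-- The damped sine of the phase `φ` transplanted to the negative half-line by `u = -y ^ 2`; for a
Blaschke phase this is the function whose Cauchy transform vanishes. -/
def foldedSine (φ : ℝ → ℝ) (u : ℝ) : ℂ := dampedSine φ √(-u)

lemma foldedSine_of_nonneg (φ : ℝ → ℝ) {u : ℝ} (hu : 0 ≤ u) : foldedSine φ u = 0 := by
  simp [foldedSine, Real.sqrt_eq_zero_of_nonpos (neg_nonpos.mpr hu), dampedSine_zero]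

lemma exists_foldedSine_ne_zero (hφ : HasDerivAt φ (φ' 0) 0) (hzero : φ 0 = 0) (hne : φ' 0 ≠ 0) :
    ∃ u, foldedSine φ u ≠ 0 := by
  obtain ⟨y, hy, hy_ne⟩ := exists_dampedSine_ne_zero hφ hzero hne
  exact ⟨-y ^ 2, by simpa [foldedSine, Real.sqrt_sq hy.le] using hy_ne⟩

lemma integrable_foldedSine (hφ : Continuous φ) : Integrable (foldedSine φ) := by
  have hcont := continuous_dampedSine hφ
  refine integrable_comp_sqrt_neg (F := fun y ↦ (dampedSine φ y : ℂ)) (C := 1) (by fun_prop)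
    (by simp [dampedSine_zero]) fun y ↦ ?_
  simpa only [Complex.norm_real, Real.norm_eq_abs] using abs_dampedSine_le φ y

lemma hasDerivAt_ofReal_dampedSine {y : ℝ} (hφ : HasDerivAt φ (φ' y) y) :
    HasDerivAt (fun y ↦ (dampedSine φ y : ℂ)) (y • (dampedSineSlope φ φ' y : ℂ)) y := by
  simpa using (hasDerivAt_dampedSine hφ).ofReal_comp

lemma contDiff_one_foldedSine (hφ : ∀ y, HasDerivAt φ (φ' y) y) (hφ' : Continuous φ')
    (hzero : φ 0 = 0) : ContDiff ℝ 1 (foldedSine φ) := by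
  have hslope := continuous_dampedSineSlope
    (continuous_iff_continuousAt.mpr fun y ↦ (hφ y).continuousAt) hφ'
  exact contDiff_one_comp_sqrt_neg (fun y ↦ hasDerivAt_ofReal_dampedSine (hφ y)) (by fun_prop)
    (by simp [dampedSineSlope_zero hzero])

lemma integrable_deriv_foldedSine (hφ : ∀ y, HasDerivAt φ (φ' y) y) (hφ' : Continuous φ')
    (hzero : φ 0 = 0) {M : ℝ} (hM : ∀ y, |φ' y| ≤ M) : Integrable (deriv (foldedSine φ)) := by
  have hslope := continuous_dampedSineSlope
    (continuous_iff_continuousAt.mpr fun y ↦ (hφ y).continuousAt) hφ'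
  refine integrable_deriv_comp_sqrt_neg (C := 4 + M)
    (fun y ↦ hasDerivAt_ofReal_dampedSine (hφ y)) (by fun_prop)
    (by simp [dampedSineSlope_zero hzero]) fun y ↦ ?_
  simpa only [Complex.norm_real, Real.norm_eq_abs] using abs_dampedSineSlope_le (hM y)

lemma integral_dampedSine_blaschkePhase_div_eq_zero {ι : Type*} {a : ι → ℝ} (ha : ∀ i, 0 < a i)
    (hsum : Summable fun i ↦ (a i)⁻¹) (i : ι) :
    ∫ u in Set.Iio 0, dampedSine (blaschkePhase a) √(-u) / (u - a i ^ 2) = 0 := by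
  rw [integral_comp_sqrt_neg_div_eq_of_odd (dampedSine_neg (blaschkePhase_neg a)), neg_eq_zero,
    ← integral_axisWeight_mul_sin_blaschkePhase_eq_zero ha hsum i]
  refine integral_congr_ae (.of_forall fun y ↦ ?_)
  have := ha i
  simp only [dampedSine, axisWeight]
  field_simp
  ring

lemma integral_foldedSine_blaschkePhase_div_eq_zero {ι : Type*} {a : ι → ℝ} (ha : ∀ i, 0 < a i)
    (hsum : Summable fun i ↦ (a i)⁻¹) (i : ι) :
    ∫ u in Set.Iio (0 : ℝ), foldedSine (blaschkePhase a) u / (u - (a i ^ 2 : ℝ)) = 0 := by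
  simp only [foldedSine, ← Complex.ofReal_sub, ← Complex.ofReal_div]
  rw [integral_complex_ofReal, integral_dampedSine_blaschkePhase_div_eq_zero ha hsum i,
    Complex.ofReal_zero]

end FoldedSine

theorem exists_cauchy_annihilator_general (Γ : Set ℝ) (hΓ : Γ ⊆ Set.Ioi 0)
    (hsum : Summable fun γ : Γ => 1 / Real.sqrt (γ : ℝ)) :
    ∃ g : ℝ → ℂ, ContDiff ℝ 1 g ∧ (∀ t : ℝ, 0 ≤ t → g t = 0) ∧
      Integrable g ∧ Integrable (deriv g) ∧ (∃ t, g t ≠ 0) ∧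
      ∀ γ ∈ Γ, (∫ u in Set.Iio (0:ℝ), g u / ((u : ℂ) - (γ : ℂ))) = 0 := by
  let a : Γ → ℝ := fun γ ↦ √γ
  have ha (γ : Γ) : 0 < a γ := Real.sqrt_pos.mpr (hΓ γ.2)
  have ha_sq (γ : Γ) : a γ ^ 2 = γ := Real.sq_sqrt (hΓ γ.2).le
  have hsum_inv : Summable fun γ ↦ (a γ)⁻¹ := by simpa only [a, one_div] using hsum
  have hφ := hasDerivAt_blaschkePhase ha hsum_inv
  have hφ' := continuous_blaschkePhaseDeriv ha hsum_inv
  have hφ_zero := blaschkePhase_zero a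
  refine ⟨foldedSine (blaschkePhase a), contDiff_one_foldedSine hφ hφ' hφ_zero,
    fun t ht ↦ foldedSine_of_nonneg _ ht,
    integrable_foldedSine (continuous_blaschkePhase ha hsum_inv),
    integrable_deriv_foldedSine hφ hφ' hφ_zero (abs_blaschkePhaseDeriv_le ha hsum_inv),
    exists_foldedSine_ne_zero (hφ 0) hφ_zero (blaschkePhaseDeriv_pos ha 0).ne',
    fun γ hγ ↦ ?_⟩
  simpa only [ha_sq] using integral_foldedSine_blaschkePhase_div_eq_zero ha hsum_inv ⟨γ, hγ⟩

/-- **Lemma (key construction).** For a uniformly discrete `Γ ⊂ (0,∞)` with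
`∑_{γ∈Γ} 1/√γ < ∞` there is a nontrivial `g ∈ C¹(ℝ)` vanishing on `[0,∞)`, with
`g, g' ∈ L¹(ℝ)`, whose Cauchy transform vanishes on `Γ`. -/
theorem exists_cauchy_annihilator (Γ : Set ℝ) (hΓ : Γ ⊆ Set.Ioi 0)
    (hud : UniformlyDiscrete Γ)
    (hsum : Summable fun γ : Γ => 1 / Real.sqrt (γ : ℝ)) :
    ∃ g : ℝ → ℂ, ContDiff ℝ 1 g ∧ (∀ t : ℝ, 0 ≤ t → g t = 0) ∧
      Integrable g ∧ Integrable (deriv g) ∧ (∃ t, g t ≠ 0) ∧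
      ∀ γ ∈ Γ, (∫ u in Set.Iio (0:ℝ), g u / ((u : ℂ) - (γ : ℂ))) = 0 := by
  exact exists_cauchy_annihilator_general Γ hΓ hsum
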